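/- For 0 < α < 1/2, the infimum over all f ∈ K(α) and z ∈ 𝔻 \ {0} of Re(e^{iαπ}·f(z)/z) equals cos(απ)/(2α−1); that is, Q_α(απ) = cos(απ)/(2α−1). -/

import Mathlib

/-- The unit disk `{z : ℂ | |z| < 1}`. -/
noncomputable def unitDisk : Set ℂ := Metric.ball 0 1

/-- The extremal convex function of order `α`:
`k_α(z) = ((1-z)^(2α-1) - 1)/(1-2α)` (so that `k_α(0)=0`, `k_α'(0)=1`),
with `k_{1/2}(z) = -log(1-z)` (principal branches). -/
noncomputable def kfun (α : ℝ) (z : ℂ) : ℂ :=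
  if α = 1 / 2 then -Complex.log (1 - z)
  else ((1 - z) ^ ((2 * α - 1 : ℝ) : ℂ) - 1) / ((1 - 2 * α : ℝ) : ℂ)

/-- `h_α(z) = k_α(z)/z` for `z ≠ 0`, `h_α(0) = 1`. -/
noncomputable def hfun (α : ℝ) (z : ℂ) : ℂ :=
  if z = 0 then 1 else kfun α z / z

/-- `f ∈ K(α)`: `f` is analytic on the unit disk, normalized by `f(0)=0`, `f'(0)=1`,
with nonvanishing derivative and `Re(1 + z f''(z)/f'(z)) > α` on the disk. -/
def IsConvexOfOrder (α : ℝ) (f : ℂ → ℂ) : Prop :=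
  DifferentiableOn ℂ f unitDisk ∧ f 0 = 0 ∧ deriv f 0 = 1 ∧
    ∀ z ∈ unitDisk, deriv f z ≠ 0 ∧
      α < (1 + z * deriv (deriv f) z / deriv f z).re

/-!
Write `f' = exp L`. Convexity of order `α` says that `(2 - 2α) + 2 Re (ξ L' ξ) > 0`, so averaging
over circles presents `L / (2 - 2α)` as a limit of convex combinations of the kernels
`t ↦ -log (1 - t x)`. Exponentials of such combinations are products of powers `(1 - t x)⁻ᵖ`, and a
beta integral turns a product `(1 - a)⁻ᵖ (1 - b)⁻ᑫ` into an average of `(1 - s)⁻⁽ᵖ⁺ᑫ⁾` over the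
segment from `a` to `b`. Hence `f z / z` lies in the closed convex hull of `h_α(𝔻)`.

With `w = 1 - z` and `q = 1 - 2α`, the lower bound for `h_α` amounts to the inclusion of
`(w⁻ᑫ - w) (1 - conj w)` in the cone spanned by `1` and `w⁻ᑫ`, whose coefficients are nonnegative
by concavity of the sine and Bernoulli's inequality. For sharpness, `k_α` is evaluated along points
tending to `1` tangentially to the circle: there `e^{iαπ} (1 - z)⁻ᑫ` is unbounded but nearly
imaginary, and only `-e^{iαπ} / q` contributes to the real part in the limit.
-/

open MeasureTheory Set

theorem inv_integral_smul_mem_of_convex {Ω E : Type*} [MeasurableSpace Ω] {μ : Measure Ω}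
    [NormedAddCommGroup E] [NormedSpace ℝ E] [CompleteSpace E] {S : Set E} (hS : Convex ℝ S)
    (hSc : IsClosed S) {w : Ω → ℝ} {f : Ω → E} (hw : Integrable w μ) (hw0 : 0 ≤ᵐ[μ] w)
    (hpos : 0 < ∫ ω, w ω ∂μ) (hf : ∀ᵐ ω ∂μ, f ω ∈ S)
    (hwf : Integrable (fun ω => w ω • f ω) μ) :
    (∫ ω, w ω ∂μ)⁻¹ • ∫ ω, w ω • f ω ∂μ ∈ S := by
  have hmeas : AEMeasurable (fun ω => ENNReal.ofReal (w ω)) μ := hw.1.aemeasurable.ennreal_ofReal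
  have hfin : ∀ᵐ ω ∂μ, ENNReal.ofReal (w ω) < ⊤ := ae_of_all _ fun _ => ENNReal.ofReal_lt_top
  have hsmul : (fun ω => (ENNReal.ofReal (w ω)).toReal • f ω) =ᵐ[μ] fun ω => w ω • f ω :=
    hw0.mono fun ω h => by simp only [ENNReal.toReal_ofReal h]
  let ν := μ.withDensity fun ω => ENNReal.ofReal (w ω)
  have hmass : ν.real Set.univ = ∫ ω, w ω ∂μ := by
    rw [measureReal_def, withDensity_apply _ .univ, setLIntegral_univ,
      ← ofReal_integral_eq_lintegral_ofReal hw hw0, ENNReal.toReal_ofReal hpos.le]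
  have : IsFiniteMeasure ν := isFiniteMeasure_withDensity_ofReal hw.2
  have : NeZero ν := ⟨fun h => by simp [h, hpos.ne] at hmass⟩
  have hint : Integrable f ν :=
    (integrable_withDensity_iff_integrable_smul₀' hmeas hfin).2 (hwf.congr hsmul.symm)
  have hmem := hS.average_mem hSc ((withDensity_absolutelyContinuous _ _).ae_le hf) hint
  rwa [average_eq, hmass, integral_withDensity_eq_integral_toReal_smul₀ hmeas hfin,
    integral_congr_ae hsmul] at hmem

theorem mul_mem_of_mem_closedConvexHull {A : Type*} [NormedCommRing A] [NormedAlgebra ℝ A]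
    {S T K : Set A} (hK : Convex ℝ K) (hKc : IsClosed K) (h : ∀ x ∈ S, ∀ y ∈ T, x * y ∈ K)
    {a b : A} (ha : a ∈ closedConvexHull ℝ S) (hb : b ∈ closedConvexHull ℝ T) : a * b ∈ K := by
  have hright (y : A) (hy : y ∈ T) : a * y ∈ K :=
    closedConvexHull_min (t := (LinearMap.mulRight ℝ y) ⁻¹' K) (fun x hx => h x hx y hy)
      (hK.linear_preimage _) (hKc.preimage (continuous_mul_const y)) ha
  exact closedConvexHull_min (t := (LinearMap.mulLeft ℝ a) ⁻¹' K) hright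
    (hK.linear_preimage _) (hKc.preimage (continuous_const_mul a)) hb

theorem exp_smul_mem_closedConvexHull {A : Type*} [NormedCommRing A] [NormedAlgebra ℝ A]
    [CompleteSpace A] {S : Set A}
    (hS : ∀ p q : ℝ, 0 < p → 0 < q → ∀ x ∈ S, ∀ y ∈ S,
      NormedSpace.exp (p • x) * NormedSpace.exp (q • y) ∈
        closedConvexHull ℝ ((fun s => NormedSpace.exp ((p + q) • s)) '' S))
    {l : A} (hl : l ∈ closedConvexHull ℝ S) {q : ℝ} (hq : 0 < q) :
    NormedSpace.exp (q • l) ∈ closedConvexHull ℝ ((fun s => NormedSpace.exp (q • s)) '' S) := by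
  let _ : NormedAlgebra ℚ A := NormedAlgebra.restrictScalars ℚ ℝ A
  let K (q : ℝ) := closedConvexHull ℝ ((fun s : A => NormedSpace.exp (q • s)) '' S)
  have hmul (p q : ℝ) (hp : 0 < p) (hq : 0 < q) {a b : A} (ha : a ∈ K p) (hb : b ∈ K q) :
      a * b ∈ K (p + q) :=
    mul_mem_of_mem_closedConvexHull convex_closedConvexHull isClosed_closedConvexHull
      (Set.forall_mem_image.2 fun x hx => Set.forall_mem_image.2 fun y hy => hS p q hp hq x hx y hy)
      ha hb
  have hconvex : Convex ℝ {l | ∀ q : ℝ, 0 < q → NormedSpace.exp (q • l) ∈ K q} := by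
    rw [convex_iff_forall_pos]
    intro l hl m hm a b ha hb hab q hq
    have h := hmul _ _ (mul_pos hq ha) (mul_pos hq hb) (hl _ (mul_pos hq ha))
      (hm _ (mul_pos hq hb))
    rwa [← mul_add, hab, mul_one, ← NormedSpace.exp_add, mul_smul, mul_smul, ← smul_add] at h
  have hclosed : IsClosed {l | ∀ q : ℝ, 0 < q → NormedSpace.exp (q • l) ∈ K q} := by
    simp only [Set.ofPred_forall]
    exact isClosed_iInter fun q => isClosed_iInter fun _ => isClosed_closedConvexHull.preimage
      (NormedSpace.exp_continuous.comp (continuous_const_smul q))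
  have hsubset : S ⊆ {l | ∀ q : ℝ, 0 < q → NormedSpace.exp (q • l) ∈ K q} :=
    fun s hs q _ => subset_closedConvexHull ⟨s, hs, rfl⟩
  exact closedConvexHull_min hsubset hconvex hclosed hl q hq

theorem integral_mem_of_mem_closedConvexHull {X E : Type*} [TopologicalSpace X] [CompactSpace X]
    [MeasurableSpace X] [BorelSpace X] [NormedAddCommGroup E] [NormedSpace ℝ E] [CompleteSpace E]
    [SecondCountableTopologyEither X E] {μ : Measure X} [IsFiniteMeasure μ] {S : Set C(X, E)}
    {K : Set E} (hK : Convex ℝ K) (hKc : IsClosed K) (h : ∀ f ∈ S, ∫ x, f x ∂μ ∈ K) {g : C(X, E)}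
    (hg : g ∈ closedConvexHull ℝ S) : ∫ x, g x ∂μ ∈ K := by
  let T : C(X, E) →L[ℝ] E := L1.integralCLM.comp (ContinuousMap.toLp 1 μ ℝ)
  have hT (f : C(X, E)) : T f = ∫ x, f x ∂μ :=
    (L1.integral_eq _).symm.trans <| (L1.integral_eq_integral _).trans <|
      integral_congr_ae (ContinuousMap.coeFn_toLp μ f)
  have hgT : g ∈ T ⁻¹' K :=
    closedConvexHull_min (t := T ⁻¹' K) (fun f hf => by rw [mem_preimage, hT]; exact h f hf)
      (hK.linear_preimage T.toLinearMap) (hKc.preimage T.continuous) hg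
  rwa [mem_preimage, hT] at hgT

section Beta

variable {p q A B : ℂ}

theorem re_segment_pos (hA : 0 < A.re) (hB : 0 < B.re) {u : ℝ} (hu : u ∈ uIcc (0 : ℝ) 1) :
    0 < (u * A + (1 - u) * B).re := by
  rw [uIcc_of_le zero_le_one] at hu
  simpa using convex_halfSpace_re_gt 0 hA hB hu.1 (sub_nonneg.2 hu.2) (by ring)

theorem continuousOn_segment_cpow (s : ℂ) (hA : 0 < A.re) (hB : 0 < B.re) :
    ContinuousOn (fun u : ℝ => (u * A + (1 - u) * B) ^ s) (uIcc (0 : ℝ) 1) :=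
  ContinuousOn.cpow (by fun_prop) (by fun_prop) fun _ hu => Or.inl (re_segment_pos hA hB hu)

theorem hasDerivAt_integral_mul_segment_cpow (s : ℂ) {w : ℝ → ℂ}
    (hw : IntervalIntegrable w volume 0 1) (hA : 0 < A.re) (hB : 0 < B.re) :
    HasDerivAt (fun z => ∫ u in (0 : ℝ)..1, w u * (u * z + (1 - u) * B) ^ s)
      (∫ u in (0 : ℝ)..1, w u * (s * (u * A + (1 - u) * B) ^ (s - 1) * u)) A := by
  obtain ⟨r, hr, hball⟩ := Metric.nhds_basis_closedBall.mem_iff.1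
    ((isOpen_lt continuous_const Complex.continuous_re).mem_nhds hA)
  have hpos {z : ℂ} (hz : z ∈ Metric.closedBall A r) : 0 < z.re := hball hz
  have hint {z : ℂ} (hz : 0 < z.re) :
      IntervalIntegrable (fun u : ℝ => w u * (u * z + (1 - u) * B) ^ s) volume 0 1 :=
    hw.mul_continuousOn (continuousOn_segment_cpow s hz hB)
  have hint' : IntervalIntegrable
      (fun u : ℝ => w u * (s * (u * A + (1 - u) * B) ^ (s - 1) * u)) volume 0 1 :=
    hw.mul_continuousOn <|
      (continuousOn_const.mul (continuousOn_segment_cpow _ hA hB)).mul (by fun_prop)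
  obtain ⟨C, hC⟩ := ((isCompact_closedBall A r).prod isCompact_uIcc).exists_bound_of_continuousOn
    (f := fun x : ℂ × ℝ => s * (x.2 * x.1 + (1 - x.2) * B) ^ (s - 1) * x.2)
    ((continuousOn_const.mul (ContinuousOn.cpow (by fun_prop) (by fun_prop) fun x hx =>
      Or.inl (re_segment_pos (hpos hx.1) hB hx.2))).mul (by fun_prop))
  refine (intervalIntegral.hasDerivAt_integral_of_dominated_loc_of_deriv_le
    (F' := fun z u => w u * (s * (u * z + (1 - u) * B) ^ (s - 1) * u))
    (bound := fun u => ‖w u‖ * C) (Metric.closedBall_mem_nhds A hr) ?_ (hint hA)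
    (intervalIntegrable_iff.1 hint').aestronglyMeasurable ?_ (hw.norm.mul_const _) ?_).2
  · filter_upwards [Metric.closedBall_mem_nhds A hr] with z hz
    exact (intervalIntegrable_iff.1 (hint (hpos hz))).aestronglyMeasurable
  · refine .of_forall fun u hu z hz => ?_
    rw [norm_mul]
    exact mul_le_mul_of_nonneg_left (hC (z, u) ⟨hz, uIoc_subset_uIcc hu⟩) (norm_nonneg _)
  · refine .of_forall fun u hu z hz => ?_
    have hsegment : HasDerivAt (fun z : ℂ => u * z + (1 - u) * B) u z := by
      simpa using ((hasDerivAt_id z).const_mul (u : ℂ)).add_const ((1 - u) * B)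
    exact (hsegment.cpow_const
      (Or.inl (re_segment_pos (hpos hz) hB (uIoc_subset_uIcc hu)))).const_mul (w u)

-- The integrand is the derivative of `u ^ p * (1 - u) ^ q * (u * A + (1 - u) * B) ^ (-(p + q))`.
theorem integral_beta_mul_segment_cpow_eq_zero (hp : 0 < p.re) (hq : 0 < q.re) (hA : 0 < A.re)
    (hB : 0 < B.re) :
    ∫ u in (0 : ℝ)..1, (u : ℂ) ^ (p - 1) * (1 - u) ^ (q - 1) *
      ((u * A + (1 - u) * B) ^ (-(p + q) - 1) * (p * (1 - u) * B - q * u * A)) = 0 := by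
  have hp0 : p ≠ 0 := Complex.ne_zero_of_re_pos hp
  have hq0 : q ≠ 0 := Complex.ne_zero_of_re_pos hq
  have hFTC := intervalIntegral.integral_eq_sub_of_hasDerivAt_of_le (zero_le_one' ℝ)
    (f := fun u : ℝ => (u : ℂ) ^ p * (1 - u : ℂ) ^ q * (u * A + (1 - u) * B) ^ (-(p + q)))
    (f' := fun u : ℝ => (u : ℂ) ^ (p - 1) * (1 - u) ^ (q - 1) *
      ((u * A + (1 - u) * B) ^ (-(p + q) - 1) * (p * (1 - u) * B - q * u * A))) ?_ ?_ ?_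
  · simpa [hp0, hq0] using hFTC
  · have h₁ : Continuous fun u : ℝ => ((1 - u : ℝ) : ℂ) ^ q :=
      (Complex.continuous_ofReal_cpow_const hq).comp (by fun_prop)
    simp only [Complex.ofReal_sub, Complex.ofReal_one] at h₁
    rw [← uIcc_of_le zero_le_one]
    exact ((Complex.continuous_ofReal_cpow_const hp).mul h₁).continuousOn.mul
      (continuousOn_segment_cpow _ hA hB)
  · intro u hu
    have hu0 : (u : ℂ) ∈ Complex.slitPlane := Or.inl hu.1
    have hu1 : (1 - u : ℂ) ∈ Complex.slitPlane := Or.inl (by simpa using hu.2)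
    have hN := re_segment_pos hA hB (Icc_subset_uIcc (Ioo_subset_Icc_self hu))
    have h0 := Complex.slitPlane_ne_zero hu0
    have h1 := Complex.slitPlane_ne_zero hu1
    have hN0 := Complex.ne_zero_of_re_pos hN
    have hid := hasDerivAt_id (u : ℂ)
    have hder := ((hid.cpow_const hu0 (c := p)).mul
      ((hid.const_sub 1).cpow_const hu1 (c := q))).mul
      (((hid.mul_const A).add ((hid.const_sub 1).mul_const B)).cpow_const (Or.inl hN)
        (c := -(p + q)))
    refine hder.comp_ofReal.congr_deriv ?_
    simp only [id, Pi.add_apply, Pi.mul_apply]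
    rw [Complex.cpow_sub _ _ h0, Complex.cpow_sub _ _ h1, Complex.cpow_sub _ _ hN0,
      Complex.cpow_one, Complex.cpow_one, Complex.cpow_one]
    field_simp
    ring
  · exact (Complex.betaIntegral_convergent hp hq).mul_continuousOn
      ((continuousOn_segment_cpow _ hA hB).mul (by fun_prop))

theorem hasDerivAt_cpow_mul_integral_beta (hp : 0 < p.re) (hq : 0 < q.re) (hA : 0 < A.re)
    (hB : 0 < B.re) :
    HasDerivAt (fun z => z ^ p * ∫ u in (0 : ℝ)..1, (u : ℂ) ^ (p - 1) * (1 - u) ^ (q - 1) *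
      (u * z + (1 - u) * B) ^ (-(p + q))) 0 A := by
  have hA0 := Complex.ne_zero_of_re_pos hA
  have hw := Complex.betaIntegral_convergent hp hq
  have hcont (s : ℂ) := continuousOn_segment_cpow s hA hB
  refine (((hasDerivAt_id A).cpow_const (Or.inl hA) (c := p)).mul
    (hasDerivAt_integral_mul_segment_cpow (-(p + q)) hw hA hB)).congr_deriv ?_
  have hpow : A ^ p = A ^ (p - 1) * A := by
    rw [Complex.cpow_sub _ _ hA0, Complex.cpow_one, div_mul_cancel₀ _ hA0]
  rw [← mul_zero (A ^ (p - 1)), ← integral_beta_mul_segment_cpow_eq_zero hp hq hA hB, id, hpow,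
    mul_one, mul_comm p, mul_assoc, mul_assoc, ← mul_add, ← intervalIntegral.integral_const_mul,
    ← intervalIntegral.integral_const_mul, ← intervalIntegral.integral_add]
  · congr 1
    refine intervalIntegral.integral_congr fun u hu => ?_
    have hN := Complex.ne_zero_of_re_pos (re_segment_pos hA hB hu)
    simp only [Complex.cpow_sub _ (1 : ℂ) hN, Complex.cpow_one]
    field_simp
    ring
  · exact (hw.mul_continuousOn (hcont _)).const_mul _
  · exact (hw.mul_continuousOn ((continuousOn_const.mul (hcont _)).mul (by fun_prop))).const_mul _

theorem integral_beta_mul_segment_cpow (hp : 0 < p.re) (hq : 0 < q.re) (hA : 0 < A.re)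
    (hB : 0 < B.re) :
    ∫ u in (0 : ℝ)..1, (u : ℂ) ^ (p - 1) * (1 - u) ^ (q - 1) *
      (u * A + (1 - u) * B) ^ (-(p + q)) =
      Complex.betaIntegral p q * (A ^ (-p) * B ^ (-q)) := by
  have hA0 := Complex.ne_zero_of_re_pos hA
  have hB0 := Complex.ne_zero_of_re_pos hB
  have hAp : A ^ p ≠ 0 := Complex.cpow_ne_zero_iff.2 (.inl hA0)
  have hBp : B ^ p ≠ 0 := Complex.cpow_ne_zero_iff.2 (.inl hB0)
  have hconst := (isOpen_lt continuous_const Complex.continuous_re).is_const_of_deriv_eq_zero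
    (convex_halfSpace_re_gt 0).isPreconnected
    (fun z hz => (hasDerivAt_cpow_mul_integral_beta hp hq hz
      hB).differentiableAt.differentiableWithinAt)
    (fun z hz => (hasDerivAt_cpow_mul_integral_beta hp hq hz hB).deriv) hA hB
  rw [← mul_right_inj' hAp, hconst]
  simp only [← add_mul, add_sub_cancel, one_mul, intervalIntegral.integral_mul_const]
  rw [← Complex.betaIntegral, neg_add, Complex.cpow_add _ _ hB0, Complex.cpow_neg A,
    Complex.cpow_neg B p]
  field_simp

end Beta

theorem mem_of_forall_smul_eq_intervalIntegral {X E : Type*} [TopologicalSpace X] [CompactSpace X]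
    [NormedAddCommGroup E] [NormedSpace ℝ E] [CompleteSpace E] {S : Set C(X, E)} (hS : Convex ℝ S)
    (hSc : IsClosed S) {a b : ℝ} (hab : a ≤ b) {w : ℝ → ℝ} (hw : IntervalIntegrable w volume a b)
    (hw0 : ∀ u ∈ Icc a b, 0 ≤ w u) (hpos : 0 < ∫ u in a..b, w u) {f : ℝ → C(X, E)}
    (hf : Continuous f) (hfS : ∀ u, f u ∈ S) {g : C(X, E)}
    (hg : ∀ x, (∫ u in a..b, w u) • g x = ∫ u in a..b, w u • f u x) : g ∈ S := by
  have hwf : IntervalIntegrable (fun u => w u • f u) volume a b :=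
    hw.smul_continuousOn hf.continuousOn
  have hint : ∫ u in a..b, w u • f u = (∫ u in a..b, w u) • g := by
    ext x
    rw [ContinuousMap.smul_apply, hg, intervalIntegral.integral_of_le hab,
      ContinuousMap.integral_apply hwf.1, intervalIntegral.integral_of_le hab]
    rfl
  have hmem := inv_integral_smul_mem_of_convex hS hSc hw.1
    (ae_restrict_of_forall_mem measurableSet_Ioc fun u hu => hw0 u (Ioc_subset_Icc_self hu))
    (by rwa [← intervalIntegral.integral_of_le hab]) (ae_of_all _ hfS) hwf.1
  rwa [← intervalIntegral.integral_of_le hab, ← intervalIntegral.integral_of_le hab, hint,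
    inv_smul_smul₀ hpos.ne'] at hmem

theorem re_one_sub_pos {x : ℂ} (hx : ‖x‖ < 1) : 0 < (1 - x).re := by
  simpa using (Complex.re_le_norm x).trans_lt hx

theorem norm_unitInterval_mul_lt (t : unitInterval) {x : ℂ} {r : ℝ} (hx : ‖x‖ < r) :
    ‖(t : ℝ) * x‖ < r := by
  rw [norm_mul, Complex.norm_real, Real.norm_of_nonneg t.2.1]
  exact (mul_le_of_le_one_left (norm_nonneg _) t.2.2).trans_lt hx

/-- The function `t ↦ -log (1 - t x)` on the unit interval, as a continuous function of `x` in the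
unit disk. -/
noncomputable def logKernel : C(unitDisk, C(unitInterval, ℂ)) :=
  ContinuousMap.curry
    ⟨fun z : unitDisk × unitInterval => -Complex.log (1 - (z.2 : ℝ) * z.1), by
      refine (Continuous.clog (by fun_prop) fun z => ?_).neg
      exact Or.inl (re_one_sub_pos (norm_unitInterval_mul_lt z.2 (mem_ball_zero_iff.1 z.1.2)))⟩

theorem logKernel_apply (x : unitDisk) (t : unitInterval) :
    logKernel x t = -Complex.log (1 - (t : ℝ) * x) := rfl

theorem exp_continuousMap_apply {X : Type*} [TopologicalSpace X] [CompactSpace X] (g : C(X, ℂ))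
    (x : X) :
    NormedSpace.exp g x = Complex.exp (g x) := by
  rw [Complex.exp_eq_exp_ℂ]
  exact NormedSpace.map_exp ((Pi.evalRingHom (fun _ => ℂ) x).comp
    (ContinuousMap.coeFnRingHom (α := X) (β := ℂ))) (continuous_eval_const x) g

theorem exp_smul_logKernel_apply (q : ℝ) (x : unitDisk) (t : unitInterval) :
    NormedSpace.exp (q • logKernel x) t = (1 - (t : ℝ) * x) ^ (-q : ℂ) := by
  have h := re_one_sub_pos (norm_unitInterval_mul_lt t (mem_ball_zero_iff.1 x.2))
  rw [exp_continuousMap_apply, Complex.cpow_def_of_ne_zero (Complex.ne_zero_of_re_pos h),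
    ContinuousMap.smul_apply, logKernel_apply, Complex.real_smul]
  ring_nf

theorem ofReal_beta_weight (p q : ℝ) {u : ℝ} (hu : u ∈ Icc (0 : ℝ) 1) :
    ((u ^ (p - 1) * (1 - u) ^ (q - 1) : ℝ) : ℂ) =
      (u : ℂ) ^ (p - 1 : ℂ) * (1 - u) ^ (q - 1 : ℂ) := by
  rw [Complex.ofReal_mul, Complex.ofReal_cpow hu.1, Complex.ofReal_cpow (sub_nonneg.2 hu.2)]
  push_cast
  rfl

theorem intervalIntegrable_beta_weight {p q : ℝ} (hp : 0 < p) (hq : 0 < q) :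
    IntervalIntegrable (fun u : ℝ => u ^ (p - 1) * (1 - u) ^ (q - 1)) volume 0 1 := by
  have hconv := Complex.betaIntegral_convergent (u := p) (v := q) hp hq
  rw [intervalIntegrable_iff_integrableOn_Ioc_of_le zero_le_one] at hconv ⊢
  refine IntegrableOn.congr_fun hconv.re (fun u hu => ?_) measurableSet_Ioc
  simp only [← ofReal_beta_weight p q (Ioc_subset_Icc_self hu), RCLike.re_to_complex,
    Complex.ofReal_re]

theorem ofReal_integral_beta_weight (p q : ℝ) :
    ((∫ u in (0 : ℝ)..1, u ^ (p - 1) * (1 - u) ^ (q - 1) : ℝ) : ℂ) = Complex.betaIntegral p q := by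
  rw [← intervalIntegral.integral_ofReal]
  refine intervalIntegral.integral_congr fun u hu => ofReal_beta_weight p q ?_
  rwa [uIcc_of_le zero_le_one] at hu

theorem integral_beta_weight_smul_one_sub_segment_cpow {p q : ℝ} (hp : 0 < p) (hq : 0 < q)
    {x y : ℂ} (hx : ‖x‖ < 1) (hy : ‖y‖ < 1) :
    ∫ u in (0 : ℝ)..1, (u ^ (p - 1) * (1 - u) ^ (q - 1)) •
        (1 - (u * x + (1 - u) * y)) ^ (-(p + q : ℝ) : ℂ) =
      (∫ u in (0 : ℝ)..1, u ^ (p - 1) * (1 - u) ^ (q - 1)) •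
        ((1 - x) ^ (-p : ℂ) * (1 - y) ^ (-q : ℂ)) := by
  rw [Complex.real_smul, ofReal_integral_beta_weight, ← integral_beta_mul_segment_cpow
    (p := p) (q := q) hp hq (re_one_sub_pos hx) (re_one_sub_pos hy)]
  refine intervalIntegral.integral_congr fun u hu => ?_
  rw [uIcc_of_le zero_le_one] at hu
  simp only [Complex.real_smul, ofReal_beta_weight p q hu]
  push_cast
  ring_nf

-- `(1 - x)⁻ᵖ (1 - y)⁻ᑫ` is the average of `(1 - s)⁻⁽ᵖ⁺ᑫ⁾` over the segment from `x` to `y` for the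
-- beta distribution, and the same distribution serves all `t x`, `t y` simultaneously.
theorem exp_logKernel_mul_mem_closedConvexHull {p q : ℝ} (hp : 0 < p) (hq : 0 < q)
    (x y : unitDisk) :
    NormedSpace.exp (p • logKernel x) * NormedSpace.exp (q • logKernel y) ∈
      closedConvexHull ℝ ((fun l => NormedSpace.exp ((p + q) • l)) '' range logKernel) := by
  let segment : C(unitInterval, unitDisk) :=
    ⟨fun c => ⟨(c : ℝ) * x + (1 - (c : ℝ)) * y, by
      have := convex_ball (0 : ℂ) 1 x.2 y.2 c.2.1 (sub_nonneg.2 c.2.2) (by ring)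
      rwa [Complex.real_smul, Complex.real_smul, Complex.ofReal_sub, Complex.ofReal_one] at this⟩,
      by fun_prop⟩
  let F (u : ℝ) : C(unitInterval, ℂ) :=
    NormedSpace.exp ((p + q) • logKernel (segment (projIcc 0 1 zero_le_one u)))
  have hF_mem (u : ℝ) : F u ∈ (fun l => NormedSpace.exp ((p + q) • l)) '' range logKernel :=
    ⟨_, mem_range_self _, rfl⟩
  have hF : Continuous F := by
    let _ : NormedAlgebra ℚ C(unitInterval, ℂ) := NormedAlgebra.restrictScalars ℚ ℝ _
    exact NormedSpace.exp_continuous.comp (((logKernel.continuous.comp segment.continuous).comp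
      continuous_projIcc).const_smul (p + q))
  have hw := intervalIntegrable_beta_weight hp hq
  refine mem_of_forall_smul_eq_intervalIntegral convex_closedConvexHull isClosed_closedConvexHull
    zero_le_one hw
    (fun u hu => mul_nonneg (Real.rpow_nonneg hu.1 _) (Real.rpow_nonneg (sub_nonneg.2 hu.2) _))
    (intervalIntegral.intervalIntegral_pos_of_pos_on hw (fun u hu =>
      mul_pos (Real.rpow_pos_of_pos hu.1 _) (Real.rpow_pos_of_pos (sub_pos.2 hu.2) _)) one_pos)
    hF (fun u => subset_closedConvexHull (hF_mem u)) fun t => ?_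
  rw [ContinuousMap.mul_apply, exp_smul_logKernel_apply, exp_smul_logKernel_apply,
    ← integral_beta_weight_smul_one_sub_segment_cpow hp hq
    (norm_unitInterval_mul_lt t (mem_ball_zero_iff.1 x.2))
    (norm_unitInterval_mul_lt t (mem_ball_zero_iff.1 y.2))]
  refine intervalIntegral.integral_congr fun u hu => ?_
  rw [uIcc_of_le zero_le_one] at hu
  simp only [F, exp_smul_logKernel_apply, projIcc_of_mem _ hu]
  congr 3
  simp only [segment, ContinuousMap.coe_mk]
  ring

section CircleAverage

variable {L h : ℂ → ℂ} {z : ℂ} {r : ℝ}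

theorem circleIntegral_deriv_mul_eq_neg {u v u' v' : ℂ → ℂ} {c : ℂ} {R : ℝ} (hR : 0 ≤ R)
    (hu : ∀ ξ ∈ Metric.sphere c R, HasDerivAt u (u' ξ) ξ)
    (hv : ∀ ξ ∈ Metric.sphere c R, HasDerivAt v (v' ξ) ξ)
    (hu' : ContinuousOn u' (Metric.sphere c R)) (hv' : ContinuousOn v' (Metric.sphere c R)) :
    ∮ ξ in C(c, R), u' ξ * v ξ = -∮ ξ in C(c, R), u ξ * v' ξ := by
  have huc : ContinuousOn u (Metric.sphere c R) := fun ξ hξ =>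
    (hu ξ hξ).continuousAt.continuousWithinAt
  have hvc : ContinuousOn v (Metric.sphere c R) := fun ξ hξ =>
    (hv ξ hξ).continuousAt.continuousWithinAt
  exact add_eq_zero_iff_eq_neg.1 <| (circleIntegral.integral_add
    ((hu'.mul hvc).circleIntegrable hR) ((huc.mul hv').circleIntegrable hR)).symm.trans <|
    circleIntegral.integral_eq_zero_of_hasDerivWithinAt hR fun ξ hξ =>
      ((hu ξ hξ).mul (hv ξ hξ)).hasDerivWithinAt

theorem circleAverage_id_mul (g : ℂ → ℂ) (hr : 0 < r) :
    Real.circleAverage (fun ξ => ξ * g ξ) 0 r =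
      (2 * Real.pi * Complex.I)⁻¹ * ∮ ξ in C(0, r), g ξ := by
  rw [Real.circleAverage_eq_circleIntegral hr.ne', smul_eq_mul]
  congr 1
  refine circleIntegral.integral_congr hr.le fun ξ hξ => ?_
  simp only [sub_zero, smul_eq_mul,
    inv_mul_cancel_left₀ (Metric.ne_of_mem_sphere hξ hr.ne')]

theorem circleAverage_conj (f : ℂ → ℂ) (c : ℂ) (R : ℝ) :
    Real.circleAverage (fun ξ => (starRingEnd ℂ) (f ξ)) c R =
      (starRingEnd ℂ) (Real.circleAverage f c R) := by
  simp only [Real.circleAverage_def, intervalIntegral.intervalIntegral_conj, Complex.real_smul,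
    map_mul, Complex.conj_ofReal]

theorem hasDerivAt_log_one_sub_div {ξ : ℂ} (hξ : ‖z‖ < ‖ξ‖) :
    HasDerivAt (fun ξ => Complex.log (1 - z / ξ)) ((ξ - z)⁻¹ - ξ⁻¹) ξ := by
  have hξ0 : ξ ≠ 0 := norm_pos_iff.1 ((norm_nonneg z).trans_lt hξ)
  have hξz : ξ - z ≠ 0 := sub_ne_zero.2 fun h => hξ.ne (congrArg norm h.symm)
  have hlt : ‖z / ξ‖ < 1 := by rwa [norm_div, div_lt_one (norm_pos_iff.2 hξ0)]
  have hquot : HasDerivAt (fun ξ : ℂ => 1 - z / ξ) (-(z * -(ξ ^ 2)⁻¹)) ξ := by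
    simpa only [div_eq_mul_inv] using ((hasDerivAt_inv hξ0).const_mul z).const_sub 1
  refine (hquot.clog (Or.inl (re_one_sub_pos hlt))).congr_deriv ?_
  rw [one_sub_div hξ0]
  field_simp
  ring

theorem continuousOn_log_one_sub_div (hz : ‖z‖ < r) :
    ContinuousOn (fun ξ => Complex.log (1 - z / ξ)) (Metric.sphere 0 r) := fun ξ hξ =>
  (hasDerivAt_log_one_sub_div
    (by rwa [mem_sphere_zero_iff_norm.1 hξ])).continuousAt.continuousWithinAt

theorem sphere_subset_unitDisk (hr : r < 1) : Metric.sphere (0 : ℂ) r ⊆ unitDisk :=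
  Metric.sphere_subset_closedBall.trans (Metric.closedBall_subset_ball hr)

theorem diffContOnCl_ball (hh : DifferentiableOn ℂ h unitDisk) (hr0 : 0 < r) (hr1 : r < 1) :
    DiffContOnCl ℂ h (Metric.ball 0 r) := by
  refine (hh.mono ?_).diffContOnCl
  rw [closure_ball _ hr0.ne']
  exact Metric.closedBall_subset_ball hr1

theorem circleAverage_id_mul_deriv_mul_log (hL : DifferentiableOn ℂ L unitDisk) (hr0 : 0 < r)
    (hr1 : r < 1) (hz : ‖z‖ < r) :
    Real.circleAverage (fun ξ => ξ * deriv L ξ * Complex.log (1 - z / ξ)) 0 r = L 0 - L z := by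
  have hsub := sphere_subset_unitDisk hr1
  have hinv (w : ℂ) (hw : ‖w‖ < r) : ContinuousOn (fun ξ : ℂ => (ξ - w)⁻¹) (Metric.sphere 0 r) :=
    ContinuousOn.inv₀ (by fun_prop) fun ξ hξ => sub_ne_zero.2 fun h =>
      hw.ne (h ▸ mem_sphere_zero_iff_norm.1 hξ)
  have h0 : ‖(0 : ℂ)‖ < r := by rwa [norm_zero]
  have hcauchy (w : ℂ) (hw : ‖w‖ < r) :
      ∮ ξ in C(0, r), (ξ - w)⁻¹ * L ξ = 2 * Real.pi * Complex.I * L w :=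
    (diffContOnCl_ball hL hr0 hr1).circleIntegral_sub_inv_smul (mem_ball_zero_iff.2 hw)
  have hint (w : ℂ) (hw : ‖w‖ < r) : CircleIntegrable (fun ξ => (ξ - w)⁻¹ * L ξ) 0 r :=
    ((hinv w hw).mul (hL.continuousOn.mono hsub)).circleIntegrable hr0.le
  have hparts := circleIntegral_deriv_mul_eq_neg hr0.le
    (fun ξ hξ => (hL.differentiableAt (Metric.isOpen_ball.mem_nhds (hsub hξ))).hasDerivAt)
    (fun ξ hξ => hasDerivAt_log_one_sub_div (hz.trans_eq (mem_sphere_zero_iff_norm.1 hξ).symm))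
    ((hL.deriv Metric.isOpen_ball).continuousOn.mono hsub)
    ((hinv z hz).sub (by simpa only [sub_zero] using hinv 0 h0))
  have hsplit : ∮ ξ in C(0, r), L ξ * ((ξ - z)⁻¹ - ξ⁻¹) =
      2 * Real.pi * Complex.I * L z - 2 * Real.pi * Complex.I * L 0 := by
    rw [← hcauchy z hz, ← hcauchy 0 h0, ← circleIntegral.integral_sub (hint z hz) (hint 0 h0)]
    simp only [sub_zero, mul_sub, mul_comm]
  simp only [mul_assoc]
  rw [circleAverage_id_mul _ hr0, hparts, hsplit, ← mul_sub, ← mul_neg, neg_sub,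
    inv_mul_cancel_left₀ Complex.two_pi_I_ne_zero]

-- On the circle, `z / ξ` is the conjugate of `conj z * ξ / r ^ 2`, so the integrand is the
-- conjugate of a holomorphic function vanishing at the centre.
theorem circleAverage_conj_mul_log (hh : DifferentiableOn ℂ h unitDisk) (hr0 : 0 < r)
    (hr1 : r < 1) (hz : ‖z‖ < r) :
    Real.circleAverage (fun ξ => (starRingEnd ℂ) (h ξ) * Complex.log (1 - z / ξ)) 0 r = 0 := by
  let m (ξ : ℂ) : ℂ := h ξ * Complex.log (1 - (starRingEnd ℂ) z * ξ / (r : ℂ) ^ 2)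
  have hre (ξ : ℂ) (hξ : ξ ∈ Metric.closedBall (0 : ℂ) r) :
      0 < (1 - (starRingEnd ℂ) z * ξ / (r : ℂ) ^ 2).re := by
    rw [mem_closedBall_zero_iff] at hξ
    refine re_one_sub_pos ?_
    rw [norm_div, norm_mul, RCLike.norm_conj, norm_pow, Complex.norm_real,
      Real.norm_of_nonneg hr0.le, div_lt_one (by positivity), sq]
    exact (mul_le_mul_of_nonneg_left hξ (norm_nonneg z)).trans_lt (mul_lt_mul_of_pos_right hz hr0)
  have hm : DiffContOnCl ℂ m (Metric.ball 0 |r|) := by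
    rw [abs_of_pos hr0]
    refine DifferentiableOn.diffContOnCl ?_
    rw [closure_ball _ hr0.ne']
    exact (hh.mono (Metric.closedBall_subset_ball hr1)).mul
      (DifferentiableOn.clog (by fun_prop) fun ξ hξ => Or.inl (hre ξ hξ))
  have hmean : Real.circleAverage (fun ξ => (starRingEnd ℂ) (m ξ)) 0 r = 0 := by
    rw [circleAverage_conj, hm.circleAverage]
    simp [m]
  refine (Real.circleAverage_congr_sphere fun ξ hξ => ?_).trans hmean
  rw [abs_of_pos hr0] at hξ
  have hslit : 1 - (starRingEnd ℂ) z * ξ / (r : ℂ) ^ 2 ∈ Complex.slitPlane :=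
    Or.inl (hre ξ (Metric.sphere_subset_closedBall hξ))
  have hξ0 : ξ ≠ 0 := Metric.ne_of_mem_sphere hξ hr0.ne'
  have hreflect : (starRingEnd ℂ) (1 - (starRingEnd ℂ) z * ξ / (r : ℂ) ^ 2) = 1 - z / ξ := by
    have hr2 : (r : ℂ) ^ 2 = ξ * (starRingEnd ℂ) ξ := by
      rw [Complex.mul_conj, Complex.normSq_eq_norm_sq, mem_sphere_zero_iff_norm.1 hξ,
        Complex.ofReal_pow]
    have hξc : (starRingEnd ℂ) ξ ≠ 0 := by rwa [map_ne_zero]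
    simp only [map_sub, map_one, map_div₀, map_mul, Complex.conj_conj, hr2]
    field_simp
  simp only [m, map_mul]
  rw [← Complex.log_conj _ (Complex.mem_slitPlane_iff_arg.1 hslit).1, hreflect]

theorem circleAverage_re_mul_log (hL : DifferentiableOn ℂ L unitDisk) (p : ℝ) (hr0 : 0 < r)
    (hr1 : r < 1) (hz : ‖z‖ < r) :
    Real.circleAverage (fun ξ => ((p + 2 * (ξ * deriv L ξ).re : ℝ) : ℂ) *
      Complex.log (1 - z / ξ)) 0 r = L 0 - L z := by
  have hd : DifferentiableOn ℂ (fun ξ => ξ * deriv L ξ) unitDisk :=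
    differentiableOn_id.mul (hL.deriv Metric.isOpen_ball)
  have hd' : DifferentiableOn ℂ (fun ξ => p + ξ * deriv L ξ) unitDisk := hd.const_add _
  have hsub := sphere_subset_unitDisk hr1
  have hlog := continuousOn_log_one_sub_div hz
  have hadd := Real.circleAverage_fun_add
    (((hd.continuousOn.mono hsub).mul hlog).circleIntegrable hr0.le)
    (((Complex.continuous_conj.comp_continuousOn (hd'.continuousOn.mono hsub)).mul
      hlog).circleIntegrable hr0.le)
  calc _ = Real.circleAverage (fun ξ => ξ * deriv L ξ * Complex.log (1 - z / ξ) +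
        (starRingEnd ℂ) (p + ξ * deriv L ξ) * Complex.log (1 - z / ξ)) 0 r := by
        congr 1 with ξ
        rw [← add_mul]
        congr 1
        apply Complex.ext <;> simp <;> ring
    _ = L 0 - L z + 0 := hadd.trans (congrArg₂ (· + ·)
        (circleAverage_id_mul_deriv_mul_log hL hr0 hr1 hz)
        (circleAverage_conj_mul_log hd' hr0 hr1 hz))
    _ = L 0 - L z := add_zero _

theorem circleAverage_add_two_re (hh : DifferentiableOn ℂ h unitDisk) (p : ℝ) (hr0 : 0 < r)
    (hr1 : r < 1) :
    Real.circleAverage (fun ξ => p + 2 * (h ξ).re) 0 r = p + 2 * (h 0).re := by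
  have hd : DifferentiableOn ℂ (fun ξ => p + 2 * h ξ) unitDisk := (hh.const_mul 2).const_add _
  have hcomm := Complex.reCLM.circleAverage_comp_comm
    ((hd.continuousOn.mono (sphere_subset_unitDisk hr1)).circleIntegrable hr0.le)
  rw [DiffContOnCl.circleAverage (by
    rw [abs_of_pos hr0]; exact diffContOnCl_ball hd hr0 hr1)] at hcomm
  simpa [Function.comp_def] using hcomm

end CircleAverage

theorem integral_circleMap_eq_smul_circleAverage {E : Type*} [NormedAddCommGroup E]
    [NormedSpace ℝ E] (f : ℂ → E) (c : ℂ) (R : ℝ) :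
    ∫ θ in (0 : ℝ)..2 * Real.pi, f (circleMap c R θ) =
      (2 * Real.pi) • Real.circleAverage f c R := by
  rw [Real.circleAverage_def, smul_inv_smul₀ Real.two_pi_pos.ne']

-- `L (t * z) / p` is the average of `-log (1 - t * z / ξ)` over a circle `|ξ| = r > |z|`, with the
-- density `(p + 2 * Re (ξ * L' ξ)) / p` of total mass one.
theorem mem_closedConvexHull_range_logKernel {L : ℂ → ℂ} (hL : DifferentiableOn ℂ L unitDisk)
    (hL0 : L 0 = 0) {p : ℝ} (hp : 0 < p)
    (hpos : ∀ ξ ∈ unitDisk, 0 < p + 2 * (ξ * deriv L ξ).re) {z : ℂ} (hz : z ∈ unitDisk)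
    {g : C(unitInterval, ℂ)} (hg : ∀ t, p • g t = L ((t : ℝ) * z)) :
    g ∈ closedConvexHull ℝ (range logKernel) := by
  obtain ⟨r, hzr, hr1⟩ := exists_between (mem_ball_zero_iff.1 hz)
  have hr0 : 0 < r := (norm_nonneg z).trans_lt hzr
  have hcircle (θ : ℝ) : circleMap 0 r θ ∈ unitDisk :=
    sphere_subset_unitDisk hr1 (circleMap_mem_sphere 0 hr0.le θ)
  have hquot (θ : ℝ) : z / circleMap 0 r θ ∈ unitDisk := by
    rwa [unitDisk, mem_ball_zero_iff, norm_div, norm_circleMap_zero, abs_of_pos hr0,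
      div_lt_one hr0]
  have hd : DifferentiableOn ℂ (fun ξ => ξ * deriv L ξ) unitDisk :=
    differentiableOn_id.mul (hL.deriv Metric.isOpen_ball)
  let W (ξ : ℂ) : ℝ := p + 2 * (ξ * deriv L ξ).re
  have hW : Continuous fun θ => W (circleMap 0 r θ) :=
    continuous_const.add <| continuous_const.mul <| Complex.continuous_re.comp <|
      hd.continuousOn.comp_continuous (continuous_circleMap 0 r) hcircle
  have hmass : ∫ θ in (0 : ℝ)..2 * Real.pi, W (circleMap 0 r θ) = 2 * Real.pi * p := by
    rw [integral_circleMap_eq_smul_circleAverage W, circleAverage_add_two_re hd p hr0 hr1]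
    simp
  refine mem_of_forall_smul_eq_intervalIntegral convex_closedConvexHull isClosed_closedConvexHull
    Real.two_pi_pos.le (hW.intervalIntegrable _ _) (fun θ _ => (hpos _ (hcircle θ)).le)
    (by rw [hmass]; positivity) (f := fun θ => logKernel ⟨_, hquot θ⟩) ?_
    (fun θ => subset_closedConvexHull (mem_range_self _)) fun t => ?_
  · exact logKernel.continuous.comp <| Continuous.subtype_mk
      (continuous_const.div (continuous_circleMap 0 r) fun θ => circleMap_ne_center hr0.ne') _
  · have hlog := integral_circleMap_eq_smul_circleAverage (fun ξ => (W ξ : ℂ) *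
      Complex.log (1 - (t : ℝ) * z / ξ)) 0 r
    rw [circleAverage_re_mul_log hL p hr0 hr1 (norm_unitInterval_mul_lt t hzr), hL0, zero_sub,
      smul_neg, ← neg_eq_iff_eq_neg, ← intervalIntegral.integral_neg] at hlog
    rw [hmass, mul_smul, hg, ← hlog]
    simp only [logKernel_apply, Complex.real_smul, mul_neg, mul_div_assoc, W]

theorem exists_exp_eq_of_ne_zero {g : ℂ → ℂ} {c : ℂ} {r : ℝ}
    (hg : DifferentiableOn ℂ g (Metric.ball c r)) (hg0 : ∀ z ∈ Metric.ball c r, g z ≠ 0) :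
    ∃ L : ℂ → ℂ, L c = 0 ∧ ∀ z ∈ Metric.ball c r,
      HasDerivAt L (deriv g z / g z) z ∧ g z = g c * Complex.exp (L z) := by
  obtain ⟨L, hL0, hL⟩ :=
    ((hg.deriv Metric.isOpen_ball).div hg hg0).isExactOn_ball.with_val_at c 0
  refine ⟨L, hL0, fun z hz => ⟨hL z hz, ?_⟩⟩
  have hder (w : ℂ) (hw : w ∈ Metric.ball c r) :
      HasDerivAt (fun w => g w * Complex.exp (-L w)) 0 w := by
    refine ((hg.differentiableAt (Metric.isOpen_ball.mem_nhds hw)).hasDerivAt.mul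
      (hL w hw).neg.cexp).congr_deriv ?_
    have := hg0 w hw
    simp only [Pi.neg_apply, Pi.div_apply]
    field_simp
    ring
  have hconst := Metric.isOpen_ball.is_const_of_deriv_eq_zero (convex_ball c r).isPreconnected
    (fun w hw => (hder w hw).differentiableAt.differentiableWithinAt)
    (fun w hw => (hder w hw).deriv) hz (Metric.mem_ball_self (Metric.pos_of_mem_ball hz))
  simp only [hL0, neg_zero, Complex.exp_zero, mul_one] at hconst
  rw [← hconst, mul_assoc, ← Complex.exp_add, neg_add_cancel, Complex.exp_zero, mul_one]

theorem mul_integral_unitInterval_eq_sub {f f' : ℂ → ℂ}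
    (hf : ∀ z ∈ unitDisk, HasDerivAt f (f' z) z) (hf' : ContinuousOn f' unitDisk) {z : ℂ}
    (hz : z ∈ unitDisk) : z * ∫ t : unitInterval, f' ((t : ℝ) * z) = f z - f 0 := by
  have hmem (t : ℝ) (ht : t ∈ Icc (0 : ℝ) 1) : (t : ℂ) * z ∈ unitDisk :=
    mem_ball_zero_iff.2 (norm_unitInterval_mul_lt ⟨t, ht⟩ (mem_ball_zero_iff.1 hz))
  have hFTC := intervalIntegral.integral_unitInterval_deriv_eq_sub (f := f) (f' := f') (z₀ := 0)
    (z₁ := z) (by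
      simp only [zero_add, Complex.real_smul]
      exact hf'.comp (by fun_prop) hmem)
    fun t ht => hf _ (by simpa only [zero_add, Complex.real_smul] using hmem t ht)
  simp only [zero_add, Complex.real_smul, smul_eq_mul] at hFTC
  rw [← hFTC, intervalIntegral.integral_of_le zero_le_one, ← integral_Icc_eq_integral_Ioc]
  exact congrArg (z * ·) (integral_subtype measurableSet_Icc fun t : ℝ => f' (t * z))

theorem hasDerivAt_one_sub_cpow_const (c : ℂ) {z : ℂ} (hz : z ∈ unitDisk) :
    HasDerivAt (fun z : ℂ => (1 - z) ^ c) (-c * (1 - z) ^ (c - 1)) z := by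
  refine (((hasDerivAt_id z).const_sub 1).cpow_const
    (Or.inl (re_one_sub_pos (mem_ball_zero_iff.1 hz)))).congr_deriv ?_
  simp

theorem hasDerivAt_kfun (α : ℝ) {z : ℂ} (hz : z ∈ unitDisk) :
    HasDerivAt (kfun α) ((1 - z) ^ ((2 * α - 2 : ℝ) : ℂ)) z := by
  by_cases hα : α = 1 / 2
  · have hk : kfun α = fun z => -Complex.log (1 - z) := funext fun z => if_pos hα
    rw [hk, hα, show ((2 * (1 / 2) - 2 : ℝ) : ℂ) = -1 by norm_num, Complex.cpow_neg_one]
    refine (((hasDerivAt_id z).const_sub 1).clog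
      (Or.inl (re_one_sub_pos (mem_ball_zero_iff.1 hz)))).neg.congr_deriv ?_
    rw [neg_div, neg_neg, one_div, id]
  · have hα' : ((1 - 2 * α : ℝ) : ℂ) ≠ 0 :=
      Complex.ofReal_ne_zero.2 fun h => hα (by linarith)
    have hk : kfun α = fun z =>
      ((1 - z) ^ ((2 * α - 1 : ℝ) : ℂ) - 1) / ((1 - 2 * α : ℝ) : ℂ) := funext fun z => if_neg hα
    rw [hk]
    refine (((hasDerivAt_one_sub_cpow_const _ hz).sub_const 1).div_const _).congr_deriv ?_
    rw [show ((2 * α - 1 : ℝ) : ℂ) - 1 = ((2 * α - 2 : ℝ) : ℂ) by push_cast; ring,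
      show -((2 * α - 1 : ℝ) : ℂ) = ((1 - 2 * α : ℝ) : ℂ) by push_cast; ring, mul_comm,
      mul_div_cancel_right₀ _ hα']

theorem half_lt_re_inv_one_sub {z : ℂ} (hz : z ∈ unitDisk) : 1 / 2 < ((1 - z)⁻¹).re := by
  have hnorm : Complex.normSq z < 1 := by
    rw [Complex.normSq_eq_norm_sq, sq_lt_one_iff₀ (norm_nonneg z)]
    exact mem_ball_zero_iff.1 hz
  have h0 : 1 - z ≠ 0 := Complex.ne_zero_of_re_pos (re_one_sub_pos (mem_ball_zero_iff.1 hz))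
  rw [Complex.inv_re, lt_div_iff₀ (Complex.normSq_pos.2 h0)]
  simp only [Complex.normSq_apply, Complex.sub_re, Complex.one_re, Complex.sub_im,
    Complex.one_im] at hnorm ⊢
  linarith

theorem kfun_zero (α : ℝ) : kfun α 0 = 0 := by simp [kfun]

theorem isConvexOfOrder_kfun {α : ℝ} (hα : α < 1) : IsConvexOfOrder α (kfun α) := by
  have hzero : (0 : ℂ) ∈ unitDisk := Metric.mem_ball_self one_pos
  refine ⟨fun z hz => (hasDerivAt_kfun α hz).differentiableAt.differentiableWithinAt,
    kfun_zero α, by simp [(hasDerivAt_kfun α hzero).deriv], fun z hz => ?_⟩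
  have h0 : 1 - z ≠ 0 := Complex.ne_zero_of_re_pos (re_one_sub_pos (mem_ball_zero_iff.1 hz))
  have hne : (1 - z) ^ ((2 * α - 2 : ℝ) : ℂ) ≠ 0 := Complex.cpow_ne_zero_iff.2 (.inl h0)
  have hderiv : deriv (kfun α) =ᶠ[nhds z] fun z => (1 - z) ^ ((2 * α - 2 : ℝ) : ℂ) := by
    filter_upwards [Metric.isOpen_ball.mem_nhds hz] with w hw using (hasDerivAt_kfun α hw).deriv
  have hquot : 1 + z * deriv (deriv (kfun α)) z / deriv (kfun α) z =
      ((2 * α - 1 : ℝ) : ℂ) + ((2 - 2 * α : ℝ) : ℂ) * (1 - z)⁻¹ := by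
    rw [hderiv.deriv_eq, (hasDerivAt_one_sub_cpow_const _ hz).deriv, hderiv.eq_of_nhds,
      Complex.cpow_sub _ _ h0, Complex.cpow_one]
    generalize (1 - z) ^ ((2 * α - 2 : ℝ) : ℂ) = w at hne ⊢
    push_cast
    field_simp
    ring
  refine ⟨hderiv.eq_of_nhds ▸ hne, ?_⟩
  rw [hquot, Complex.add_re, Complex.ofReal_re, Complex.re_ofReal_mul]
  linarith [mul_lt_mul_of_pos_left (half_lt_re_inv_one_sub hz) (show 0 < 2 - 2 * α by linarith)]

theorem integral_unitInterval_one_sub_cpow (α : ℝ) {z : ℂ} (hz : z ∈ unitDisk) :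
    ∫ t : unitInterval, (1 - (t : ℝ) * z) ^ ((2 * α - 2 : ℝ) : ℂ) = hfun α z := by
  rcases eq_or_ne z 0 with rfl | hz0
  · simp [hfun]
  · rw [hfun, if_neg hz0, eq_div_iff hz0, mul_comm, mul_integral_unitInterval_eq_sub
      (f' := fun z => (1 - z) ^ ((2 * α - 2 : ℝ) : ℂ)) (fun z => hasDerivAt_kfun α) (fun z hz =>
        (hasDerivAt_one_sub_cpow_const _ hz).continuousAt.continuousWithinAt) hz, kfun_zero,
      sub_zero]

theorem IsConvexOfOrder.exists_deriv_eq_exp {α : ℝ} {f : ℂ → ℂ} (hf : IsConvexOfOrder α f) :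
    ∃ L : ℂ → ℂ, DifferentiableOn ℂ L unitDisk ∧ L 0 = 0 ∧
      ∀ z ∈ unitDisk, deriv f z = Complex.exp (L z) ∧ α < 1 + (z * deriv L z).re := by
  obtain ⟨hd, -, hf1, hz⟩ := hf
  obtain ⟨L, hL0, hL⟩ := exists_exp_eq_of_ne_zero (hd.deriv Metric.isOpen_ball)
    fun z hmem => (hz z hmem).1
  refine ⟨L, fun z hmem => (hL z hmem).1.differentiableAt.differentiableWithinAt, hL0,
    fun z hmem => ⟨?_, ?_⟩⟩
  · rw [(hL z hmem).2, hf1, one_mul]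
  · have hre := (hz z hmem).2
    rwa [mul_div_assoc, ← (hL z hmem).1.deriv, Complex.add_re, Complex.one_re] at hre

theorem integral_mem_closedConvexHull_image_hfun {α : ℝ} {g : C(unitInterval, ℂ)}
    (hg : g ∈ closedConvexHull ℝ
      ((fun l => NormedSpace.exp ((2 - 2 * α) • l)) '' range logKernel)) :
    ∫ t, g t ∈ closedConvexHull ℝ (hfun α '' unitDisk) := by
  refine integral_mem_of_mem_closedConvexHull convex_closedConvexHull isClosed_closedConvexHull
    ?_ hg
  rintro _ ⟨_, ⟨x, rfl⟩, rfl⟩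
  refine subset_closedConvexHull ⟨x, x.2, ?_⟩
  rw [← integral_unitInterval_one_sub_cpow α x.2]
  simp only [exp_smul_logKernel_apply, Complex.ofReal_sub, neg_sub]

theorem IsConvexOfOrder.div_mem_closedConvexHull {α : ℝ} {f : ℂ → ℂ} (hα : α < 1)
    (hf : IsConvexOfOrder α f) {z : ℂ} (hz : z ∈ unitDisk) (hz0 : z ≠ 0) :
    f z / z ∈ closedConvexHull ℝ (hfun α '' unitDisk) := by
  obtain ⟨L, hL, hL0, hfL⟩ := hf.exists_deriv_eq_exp
  have hp : 0 < 2 - 2 * α := by linarith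
  have hmem (t : unitInterval) : (t : ℝ) * z ∈ unitDisk :=
    mem_ball_zero_iff.2 (norm_unitInterval_mul_lt t (mem_ball_zero_iff.1 hz))
  have hcont : Continuous fun t : unitInterval => L ((t : ℝ) * z) :=
    hL.continuousOn.comp_continuous (by fun_prop) hmem
  let g : C(unitInterval, ℂ) := (2 - 2 * α)⁻¹ • ⟨fun t => L ((t : ℝ) * z), hcont⟩
  have hg : g ∈ closedConvexHull ℝ (range logKernel) :=
    mem_closedConvexHull_range_logKernel hL hL0 hp
      (fun ξ hξ => by linarith [(hfL ξ hξ).2]) hz fun t => smul_inv_smul₀ hp.ne' _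
  have hexp := exp_smul_mem_closedConvexHull (S := range logKernel) (fun p q hp hq =>
    forall_mem_range.2 fun x => forall_mem_range.2 fun y =>
      exp_logKernel_mul_mem_closedConvexHull hp hq x y) hg hp
  have hFTC := mul_integral_unitInterval_eq_sub (fun w hw =>
    (hf.1.differentiableAt (Metric.isOpen_ball.mem_nhds hw)).hasDerivAt)
    (hf.1.deriv Metric.isOpen_ball).continuousOn hz
  rw [hf.2.1, sub_zero] at hFTC
  rw [← hFTC, mul_div_cancel_left₀ _ hz0]
  convert integral_mem_closedConvexHull_image_hfun hexp using 3 with t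
  rw [exp_continuousMap_apply, (hfL _ (hmem t)).1, ContinuousMap.smul_apply]
  exact congrArg Complex.exp (smul_inv_smul₀ hp.ne' _).symm

theorem mul_sin_le_sin_mul {t x : ℝ} (ht : 0 ≤ t) (ht1 : t ≤ 1) (hx : 0 ≤ x)
    (hx' : x ≤ Real.pi) : t * Real.sin x ≤ Real.sin (t * x) := by
  simpa only [smul_eq_mul, mul_zero, Real.sin_zero, zero_add] using
    strictConcaveOn_sin_Icc.concaveOn.2 (left_mem_Icc.2 Real.pi_nonneg) ⟨hx, hx'⟩
      (sub_nonneg.2 ht1) ht (sub_add_cancel 1 t)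

theorem one_add_le_inv_mul_add_rpow {q R : ℝ} (hq : 0 ≤ q) (hR : 0 < R) :
    1 + q ≤ R⁻¹ * q + R ^ q := by
  have hbernoulli := one_add_mul_self_le_rpow_one_add (s := R - 1) (by linarith) (p := 1 + q)
    (by linarith)
  rw [add_sub_cancel, Real.rpow_add hR, Real.rpow_one] at hbernoulli
  refine le_of_mul_le_mul_left ?_ hR
  rw [mul_add R (R⁻¹ * q), mul_inv_cancel_left₀ hR.ne']
  linarith

theorem sin_mul_add_le {q θ R : ℝ} (hq : 0 ≤ q) (hθ : 0 ≤ θ) (hqθ : q * θ + θ ≤ Real.pi)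
    (hR : 0 < R) :
    Real.sin (q * θ + θ) ≤ R⁻¹ * Real.sin (q * θ) + R ^ q * Real.sin θ := by
  rw [← add_one_mul, add_comm q] at hqθ ⊢
  have h0 : 0 ≤ (1 + q) * θ := by positivity
  have hpart {a : ℝ} (ha : 0 ≤ a) (ha' : a ≤ 1 + q) :
      a / (1 + q) * Real.sin ((1 + q) * θ) ≤ Real.sin (a * θ) := by
    have h := mul_sin_le_sin_mul (by positivity) (div_le_one_of_le₀ ha' (by linarith)) h0 hqθ
    rwa [← mul_assoc, div_mul_cancel₀ a (by positivity)] at h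
  have hsin : 0 ≤ Real.sin ((1 + q) * θ) := Real.sin_nonneg_of_nonneg_of_le_pi h0 hqθ
  calc
    Real.sin ((1 + q) * θ) = (1 + q) * (Real.sin ((1 + q) * θ) / (1 + q)) := by field_simp
    _ ≤ (R⁻¹ * q + R ^ q) * (Real.sin ((1 + q) * θ) / (1 + q)) := by
      exact mul_le_mul_of_nonneg_right (one_add_le_inv_mul_add_rpow hq hR) (by positivity)
    _ = R⁻¹ * (q / (1 + q) * Real.sin ((1 + q) * θ)) +
        R ^ q * (1 / (1 + q) * Real.sin ((1 + q) * θ)) := by ring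
    _ ≤ R⁻¹ * Real.sin (q * θ) + R ^ q * Real.sin θ := by
      gcongr
      · exact hpart hq (by linarith)
      · simpa only [one_mul] using hpart zero_le_one (by linarith)

theorem cpow_ofReal_eq_rpow_mul_exp (w : ℂ) (r : ℝ) :
    w ^ (r : ℂ) = (‖w‖ ^ r : ℝ) * Complex.exp ((r * w.arg : ℝ) * Complex.I) := by
  rw [Complex.cpow_ofReal, Complex.exp_mul_I, ← Complex.ofReal_cos, ← Complex.ofReal_sin,
    mul_comm r]

theorem sin_mul_polar_sub_mul_one_sub_conj {P R φ θ : ℝ} (hP : P ≠ 0) (hR : R ≠ 0) {v w : ℂ}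
    (hv : v = P⁻¹ * Complex.exp ((-φ : ℝ) * Complex.I))
    (hw : w = R * Complex.exp (θ * Complex.I)) :
    Real.sin φ * ((v - w) * (1 - starRingEnd ℂ w)) =
      (R * (R * Real.sin φ + P⁻¹ * Real.sin θ - Real.sin (φ + θ)) : ℝ) +
        (R * (R⁻¹ * Real.sin φ + P * Real.sin θ - Real.sin (φ + θ)) : ℝ) * v := by
  apply Complex.ext <;>
  simp only [hv, hw, Complex.mul_re, Complex.mul_im,
    Complex.sub_re, Complex.sub_im, Complex.add_re, Complex.add_im, Complex.one_re,
    Complex.one_im, Complex.conj_re, Complex.conj_im, Complex.ofReal_re, Complex.ofReal_im,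
    Complex.exp_ofReal_mul_I_re, Complex.exp_ofReal_mul_I_im, Real.sin_neg, Real.cos_neg,
    Real.sin_add] <;>
  field_simp
  · linear_combination P * R ^ 2 * Real.sin φ * Real.sin_sq_add_cos_sq θ +
      R * Real.sin θ * Real.sin_sq_add_cos_sq φ
  · ring

theorem exists_cpow_neg_sub_mul_eq_of_arg_pos {q : ℝ} (hq : 0 < q) (hq1 : q ≤ 1) {w : ℂ}
    (hw : 0 ≤ w.re) (harg : 0 < w.arg) :
    ∃ a b : ℝ, 0 ≤ a ∧ 0 ≤ b ∧
      (w ^ ((-q : ℝ) : ℂ) - w) * (1 - starRingEnd ℂ w) = a + b * w ^ ((-q : ℝ) : ℂ) := by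
  have hR : 0 < ‖w‖ := norm_pos_iff.2 fun h => by simp [h] at harg
  have hθ : w.arg ≤ Real.pi / 2 := (abs_le.1 (Complex.abs_arg_le_pi_div_two_iff.2 hw)).2
  have hqθ : q * w.arg + w.arg ≤ Real.pi := by nlinarith
  have hs : 0 < Real.sin (q * w.arg) :=
    Real.sin_pos_of_pos_of_lt_pi (by positivity) (by linarith)
  have ha := sin_mul_add_le hq.le harg.le hqθ (inv_pos.2 hR)
  have hb := sin_mul_add_le hq.le harg.le hqθ hR
  rw [inv_inv, Real.inv_rpow hR.le] at ha
  have hv := cpow_ofReal_eq_rpow_mul_exp w (-q)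
  rw [neg_mul, Real.rpow_neg hR.le] at hv
  refine ⟨_ / Real.sin (q * w.arg), _ / Real.sin (q * w.arg),
    div_nonneg (mul_nonneg hR.le (sub_nonneg.2 ha)) hs.le,
    div_nonneg (mul_nonneg hR.le (sub_nonneg.2 hb)) hs.le,
    mul_left_cancel₀ (Complex.ofReal_ne_zero.2 hs.ne') ?_⟩
  rw [sin_mul_polar_sub_mul_one_sub_conj (Real.rpow_pos_of_pos hR q).ne' hR.ne' hv
    (Complex.norm_mul_exp_arg_mul_I w).symm, mul_add, ← mul_assoc, ← Complex.ofReal_mul,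
    ← Complex.ofReal_mul, mul_div_cancel₀ _ hs.ne', mul_div_cancel₀ _ hs.ne']

theorem exists_cpow_neg_sub_mul_eq {q : ℝ} (hq : 0 < q) (hq1 : q ≤ 1) {w : ℂ} (hw : 0 < w.re) :
    ∃ a b : ℝ, 0 ≤ a ∧ 0 ≤ b ∧
      (w ^ ((-q : ℝ) : ℂ) - w) * (1 - starRingEnd ℂ w) = a + b * w ^ ((-q : ℝ) : ℂ) := by
  have hpi : w.arg ≠ Real.pi := Complex.mem_slitPlane_iff_arg.1 (Or.inl hw) |>.1
  rcases lt_trichotomy w.arg 0 with harg | harg | harg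
  · have harg' : 0 < (starRingEnd ℂ w).arg := by
      rwa [Complex.arg_conj, if_neg hpi, neg_pos]
    obtain ⟨a, b, ha, hb, hab⟩ :=
      exists_cpow_neg_sub_mul_eq_of_arg_pos hq hq1 (w := starRingEnd ℂ w) hw.le harg'
    refine ⟨a, b, ha, hb, (starRingEnd ℂ).injective ?_⟩
    rwa [Complex.conj_cpow _ _ hpi, Complex.conj_ofReal, ← map_one (starRingEnd ℂ),
      ← map_sub, ← map_sub, ← map_mul, ← Complex.conj_ofReal a, ← Complex.conj_ofReal b,
      ← map_mul, ← map_add] at hab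
  · obtain ⟨R, hR⟩ : ∃ R : ℝ, (R : ℂ) = w := ⟨‖w‖, by
      simpa only [harg, Complex.ofReal_zero, zero_mul, Complex.exp_zero, mul_one] using
        Complex.norm_mul_exp_arg_mul_I w⟩
    subst hR
    have hR0 : 0 < R := hw
    refine ⟨(R ^ (-q) - R) * (1 - R), 0, ?_, le_rfl, ?_⟩
    · rcases le_total R 1 with hR1 | hR1
      · have := Real.one_le_rpow_of_pos_of_le_one_of_nonpos hR0 hR1 (neg_nonpos.2 hq.le)
        exact mul_nonneg (by linarith) (by linarith)
      · have := Real.rpow_le_one_of_one_le_of_nonpos hR1 (neg_nonpos.2 hq.le)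
        exact mul_nonneg_of_nonpos_of_nonpos (by linarith) (by linarith)
    · rw [Complex.conj_ofReal, ← Complex.ofReal_cpow hR0.le]
      push_cast
      ring
  · exact exists_cpow_neg_sub_mul_eq_of_arg_pos hq hq1 hw.le harg

theorem re_exp_mul_cpow_neg_sub_mul_nonneg {q t : ℝ} (hq : 0 < q)
    (ht : |t| ≤ (1 - q) * (Real.pi / 2)) {w : ℂ} (hw : 0 < w.re) :
    0 ≤ (Complex.exp (t * Complex.I) *
      ((w ^ ((-q : ℝ) : ℂ) - w) * (1 - starRingEnd ℂ w))).re := by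
  have hq1 : q ≤ 1 :=
    sub_nonneg.1 (nonneg_of_mul_nonneg_left ((abs_nonneg t).trans ht) Real.pi_div_two_pos)
  obtain ⟨a, b, ha, hb, hab⟩ := exists_cpow_neg_sub_mul_eq hq hq1 hw
  obtain ⟨ht, ht'⟩ := abs_le.1 ht
  obtain ⟨hθ, hθ'⟩ := abs_le.1 (Complex.abs_arg_le_pi_div_two_iff.2 hw.le)
  have hcos : 0 ≤ Real.cos t := Real.cos_nonneg_of_mem_Icc ⟨by nlinarith, by nlinarith⟩
  have hcos' : 0 ≤ Real.cos (t + -q * w.arg) :=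
    Real.cos_nonneg_of_mem_Icc ⟨by nlinarith, by nlinarith⟩
  have hsplit : Complex.exp (t * Complex.I) * (a + b * w ^ ((-q : ℝ) : ℂ)) =
      a * Complex.exp (t * Complex.I) +
        (b * ‖w‖ ^ (-q) : ℝ) * Complex.exp ((t + -q * w.arg : ℝ) * Complex.I) := by
    rw [cpow_ofReal_eq_rpow_mul_exp, Complex.ofReal_add t, add_mul, Complex.exp_add]
    push_cast
    ring
  rw [hab, hsplit, Complex.add_re, Complex.re_ofReal_mul, Complex.re_ofReal_mul,
    Complex.exp_ofReal_mul_I_re, Complex.exp_ofReal_mul_I_re]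
  positivity

theorem one_sub_cpow_sub_one_div_eq {z c q : ℂ} (hq : q ≠ 0) (hz : z ≠ 0) :
    ((1 - z) ^ c - 1) / (q * z) = -q⁻¹ +
      ((1 - z) ^ c - (1 - z)) * (1 - starRingEnd ℂ (1 - z)) / (q * Complex.normSq z) := by
  have hz' : starRingEnd ℂ z ≠ 0 := (map_ne_zero _).2 hz
  rw [← Complex.mul_conj, map_sub, map_one]
  field_simp
  ring

theorem kfun_div_eq {α : ℝ} (hα : α ≠ 1 / 2) (z : ℂ) :
    kfun α z / z = ((1 - z) ^ ((-(1 - 2 * α) : ℝ) : ℂ) - 1) / ((1 - 2 * α : ℝ) * z) := by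
  rw [kfun, if_neg hα, div_div, neg_sub]

theorem cos_div_le_re_exp_mul_hfun {α t : ℝ} (hα : α < 1 / 2) (ht : |t| ≤ α * Real.pi) {z : ℂ}
    (hz : z ∈ unitDisk) :
    Real.cos t / (2 * α - 1) ≤ (Complex.exp (t * Complex.I) * hfun α z).re := by
  have hq : 0 < 1 - 2 * α := by linarith
  rw [← neg_sub 1 (2 * α), div_neg, hfun]
  split_ifs with hz0
  · have hcos : 0 ≤ Real.cos t := Real.cos_nonneg_of_mem_Icc
      (abs_le.1 (ht.trans (by nlinarith [Real.pi_pos])))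
    rw [mul_one, Complex.exp_ofReal_mul_I_re]
    linarith [div_nonneg hcos hq.le]
  · have hpos := re_exp_mul_cpow_neg_sub_mul_nonneg (w := 1 - z) hq (t := t) (by linarith)
      (re_one_sub_pos (mem_ball_zero_iff.1 hz))
    rw [kfun_div_eq hα.ne, one_sub_cpow_sub_one_div_eq (Complex.ofReal_ne_zero.2 hq.ne') hz0,
      mul_add, Complex.add_re, ← mul_div_assoc, ← Complex.ofReal_mul, Complex.div_ofReal_re,
      ← Complex.ofReal_inv, ← Complex.ofReal_neg, Complex.re_mul_ofReal,
      Complex.exp_ofReal_mul_I_re, mul_neg, ← div_eq_mul_inv, le_add_iff_nonneg_right]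
    exact div_nonneg hpos (mul_nonneg hq.le (Complex.normSq_nonneg z))

theorem IsConvexOfOrder.cos_div_le_re_exp_mul_div {α t : ℝ} {f : ℂ → ℂ} (hα : α < 1 / 2)
    (ht : |t| ≤ α * Real.pi) (hf : IsConvexOfOrder α f) {z : ℂ} (hz : z ∈ unitDisk) (hz0 : z ≠ 0) :
    Real.cos t / (2 * α - 1) ≤ (Complex.exp (t * Complex.I) * (f z / z)).re := by
  let l : ℂ →L[ℝ] ℝ := Complex.reCLM.comp
    (ContinuousLinearMap.mul ℝ ℂ (Complex.exp (t * Complex.I)))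
  exact closedConvexHull_min (t := l ⁻¹' Ici (Real.cos t / (2 * α - 1)))
    (forall_mem_image.2 fun w hw => cos_div_le_re_exp_mul_hfun hα ht hw)
    ((convex_Ici _).linear_preimage l.toLinearMap) (isClosed_Ici.preimage l.continuous)
    (hf.div_mem_closedConvexHull (by linarith) hz hz0)

theorem tendsto_rpow_neg_mul_nhdsGT_zero {H : ℝ → ℝ} (hH : DifferentiableAt ℝ H 0)
    (hH0 : H 0 = 0) {q : ℝ} (hq : q < 1) :
    Filter.Tendsto (fun δ => δ ^ (-q) * H δ) (nhdsWithin 0 (Ioi 0)) (nhds 0) := by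
  have hO : (fun δ => H δ) =O[nhdsWithin 0 (Ioi 0)] fun δ => δ := by
    simpa only [hH0, sub_zero] using hH.isBigO_sub.mono nhdsWithin_le_nhds
  have hpow : (fun δ : ℝ => δ ^ (-q) * δ) =ᶠ[nhdsWithin 0 (Ioi 0)] fun δ => δ ^ (1 - q) := by
    filter_upwards [self_mem_nhdsWithin] with δ hδ
    rw [← Real.rpow_add_one (ne_of_gt hδ), neg_add_eq_sub]
  refine ((Asymptotics.isBigO_refl _ _).mul hO).trans_tendsto (Filter.Tendsto.congr' hpow.symm ?_)
  have := (Real.continuous_rpow_const (q := 1 - q) (by linarith)).tendsto 0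
  rw [Real.zero_rpow (by linarith)] at this
  exact this.mono_left nhdsWithin_le_nhds

/-- A path of points `z` of the unit disk approaching `1` tangentially to the unit circle as
`δ → 0`, with `1 - z` of modulus `δ` and argument `δ - π / 2`; it witnesses the sharpness of the
bound. -/
noncomputable def tangentialPath (δ : ℝ) : ℂ := 1 + δ * Complex.I * Complex.exp (δ * Complex.I)

theorem tangentialPath_zero : tangentialPath 0 = 1 := by
  rw [tangentialPath, Complex.ofReal_zero, zero_mul, zero_mul, add_zero]

theorem differentiable_tangentialPath : Differentiable ℝ tangentialPath := by
  unfold tangentialPath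
  fun_prop

theorem tangentialPath_mem_unitDisk {δ : ℝ} (hδ : 0 < δ) (hδ1 : δ < 1) :
    tangentialPath δ ∈ unitDisk := by
  have hsin := Real.sin_gt_sub_cube hδ
  rw [unitDisk, tangentialPath, mem_ball_zero_iff, ← sq_lt_one_iff₀ (norm_nonneg _),
    ← Complex.normSq_eq_norm_sq, Complex.normSq_apply]
  simp only [Complex.add_re, Complex.add_im, Complex.mul_re, Complex.mul_im, Complex.one_re,
    Complex.one_im, Complex.ofReal_re, Complex.ofReal_im, Complex.I_re, Complex.I_im,
    Complex.exp_ofReal_mul_I_re, Complex.exp_ofReal_mul_I_im]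
  nlinarith [Real.sin_sq_add_cos_sq δ, mul_pos hδ hδ, mul_pos (mul_pos hδ hδ) hδ]

theorem tangentialPath_ne_zero {δ : ℝ} (hδ : |δ| < 1) :
    tangentialPath δ ≠ 0 := by
  intro h
  have hnorm : ‖(δ * Complex.I * Complex.exp (δ * Complex.I) : ℂ)‖ = 1 := by
    rw [eq_neg_of_add_eq_zero_right h, norm_neg, norm_one]
  rw [norm_mul, norm_mul, Complex.norm_exp_ofReal_mul_I, Complex.norm_I, mul_one, mul_one,
    Complex.norm_real] at hnorm
  exact hδ.ne hnorm

theorem exp_mul_I_mul_exp_cpow {δ : ℝ} (hδ : 0 < δ) (hδ1 : δ < 1) (α : ℝ) :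
    Complex.exp ((α * Real.pi : ℝ) * Complex.I) *
        (-(δ * Complex.I * Complex.exp (δ * Complex.I))) ^ ((-(1 - 2 * α) : ℝ) : ℂ) =
      (δ ^ (-(1 - 2 * α)) : ℝ) *
        (Complex.I * Complex.exp ((-(1 - 2 * α) * δ : ℝ) * Complex.I)) := by
  have hI : Complex.exp ((Real.pi / 2 : ℝ) * Complex.I) = Complex.I := by
    rw [Complex.ofReal_div, Complex.ofReal_ofNat, Complex.exp_pi_div_two_mul_I]
  have hpolar : -(δ * Complex.I * Complex.exp (δ * Complex.I)) =
      δ * Complex.exp ((δ - Real.pi / 2 : ℝ) * Complex.I) := by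
    rw [Complex.ofReal_sub, sub_mul, Complex.exp_sub, hI, Complex.div_I]
    ring
  have hnorm : ‖(δ * Complex.exp ((δ - Real.pi / 2 : ℝ) * Complex.I) : ℂ)‖ = δ := by
    rw [norm_mul, Complex.norm_exp_ofReal_mul_I, mul_one, Complex.norm_real,
      Real.norm_of_nonneg hδ.le]
  have harg :
      (δ * Complex.exp ((δ - Real.pi / 2 : ℝ) * Complex.I) : ℂ).arg = δ - Real.pi / 2 := by
    rw [Complex.arg_real_mul _ hδ, Complex.arg_exp_mul_I, toIocMod_eq_self]
    constructor <;> linarith [Real.pi_gt_three]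
  rw [hpolar, cpow_ofReal_eq_rpow_mul_exp, hnorm, harg, mul_left_comm]
  congr 1
  calc
    _ = Complex.exp ((Real.pi / 2 : ℝ) * Complex.I) *
        Complex.exp ((-(1 - 2 * α) * δ : ℝ) * Complex.I) := by
      rw [← Complex.exp_add, ← Complex.exp_add]
      congr 1
      push_cast
      ring
    _ = _ := by rw [hI]

theorem re_exp_mul_kfun_div_tangentialPath {α δ : ℝ} (hα : α ≠ 1 / 2) (hδ : 0 < δ)
    (hδ1 : δ < 1) :
    (Complex.exp ((α * Real.pi : ℝ) * Complex.I) *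
        (kfun α (tangentialPath δ) / tangentialPath δ)).re =
      (δ ^ (-(1 - 2 * α)) * (Complex.I * Complex.exp ((-(1 - 2 * α) * δ : ℝ) * Complex.I) /
          tangentialPath δ).re -
        (Complex.exp ((α * Real.pi : ℝ) * Complex.I) / tangentialPath δ).re) / (1 - 2 * α) := by
  have hsub : 1 - tangentialPath δ = -(δ * Complex.I * Complex.exp (δ * Complex.I)) :=
    sub_add_cancel_left _ _
  rw [kfun_div_eq hα, hsub, mul_comm ((1 - 2 * α : ℝ) : ℂ), ← div_div, ← mul_div_assoc,
    Complex.div_ofReal_re, ← mul_div_assoc, mul_sub, exp_mul_I_mul_exp_cpow hδ hδ1, mul_one,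
    sub_div, Complex.sub_re, mul_div_assoc, Complex.re_ofReal_mul]

theorem tendsto_re_exp_mul_kfun_div_tangentialPath {α : ℝ} (hα0 : 0 < α) (hα : α ≠ 1 / 2) :
    Filter.Tendsto (fun δ => (Complex.exp ((α * Real.pi : ℝ) * Complex.I) *
        (kfun α (tangentialPath δ) / tangentialPath δ)).re)
      (nhdsWithin 0 (Ioi 0)) (nhds (Real.cos (α * Real.pi) / (2 * α - 1))) := by
  have hne : tangentialPath 0 ≠ 0 := by rw [tangentialPath_zero]; exact one_ne_zero
  have hζ : DifferentiableAt ℝ tangentialPath 0 := differentiable_tangentialPath 0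
  have hfirst := tendsto_rpow_neg_mul_nhdsGT_zero (q := 1 - 2 * α) (H := fun δ =>
      (Complex.I * Complex.exp ((-(1 - 2 * α) * δ : ℝ) * Complex.I) / tangentialPath δ).re)
    (Complex.reCLM.differentiableAt.comp 0 (DifferentiableAt.div (by fun_prop) hζ hne))
    (by simp [tangentialPath_zero]) (by linarith)
  have hsecond : Filter.Tendsto
      (fun δ => (Complex.exp ((α * Real.pi : ℝ) * Complex.I) / tangentialPath δ).re)
      (nhdsWithin 0 (Ioi 0)) (nhds (Real.cos (α * Real.pi))) := by
    have h : ContinuousAt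
        (fun δ => (Complex.exp ((α * Real.pi : ℝ) * Complex.I) / tangentialPath δ).re) 0 :=
      Complex.continuous_re.continuousAt.comp (continuousAt_const.div hζ.continuousAt hne)
    have h' := h.tendsto.mono_left (nhdsWithin_le_nhds (s := Ioi 0))
    rwa [tangentialPath_zero, div_one, Complex.exp_ofReal_mul_I_re] at h'
  have hval : Real.cos (α * Real.pi) / (2 * α - 1) =
      (0 - Real.cos (α * Real.pi)) / (1 - 2 * α) := by
    rw [zero_sub, neg_div, ← div_neg, neg_sub]
  rw [hval]
  refine ((hfirst.sub hsecond).div_const (1 - 2 * α)).congr' ?_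
  filter_upwards [Ioo_mem_nhdsGT (zero_lt_one' ℝ)] with δ hδ
  exact (re_exp_mul_kfun_div_tangentialPath hα hδ.1 hδ.2).symm

/-- for `0 < α < 1/2`,
`Q_α(απ) = inf {Re(e^{iαπ} f(z)/z) : f ∈ K(α), z ∈ 𝔻 \ {0}} = cos(απ)/(2α-1)`. -/
theorem Q_at_alphaPi (α : ℝ) (hα0 : 0 < α) (hα1 : α < 1 / 2) :
    sInf {x : ℝ | ∃ f : ℂ → ℂ, IsConvexOfOrder α f ∧
        ∃ z ∈ unitDisk, z ≠ 0 ∧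
          x = (Complex.exp (((α * Real.pi : ℝ) : ℂ) * Complex.I) * (f z / z)).re}
      = Real.cos (α * Real.pi) / (2 * α - 1) := by
  have hk : IsConvexOfOrder α (kfun α) := isConvexOfOrder_kfun (by linarith)
  have habs : |α * Real.pi| ≤ α * Real.pi :=
    (abs_of_nonneg (mul_nonneg hα0.le Real.pi_nonneg)).le
  apply IsGLB.csInf_eq
  · refine ⟨?_, fun c hc => ?_⟩
    · rintro _ ⟨f, hf, z, hz, hz0, rfl⟩
      exact hf.cos_div_le_re_exp_mul_div hα1 habs hz hz0
    · refine ge_of_tendsto (tendsto_re_exp_mul_kfun_div_tangentialPath hα0 hα1.ne) ?_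
      filter_upwards [Ioo_mem_nhdsGT (zero_lt_one' ℝ)] with δ hδ
      exact hc ⟨_, hk, _, tangentialPath_mem_unitDisk hδ.1 hδ.2,
        tangentialPath_ne_zero (abs_lt.2 ⟨by linarith [hδ.1], hδ.2⟩), rfl⟩
  · exact ⟨_, _, hk, 1 / 2, mem_ball_zero_iff.2 (by norm_num), by norm_num, rfl⟩
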